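/- For every positive integer k, the function φ_k belongs to L²(0,∞) and ∫_0^∞ φ_k(x)² dx = ∫_1^∞ Δ_k(r)² r^{-3} dr, both integrals being finite. -/

import Mathlib

open scoped Real Topology
open Complex Filter MeasureTheory Finset Asymptotics

/-- The analytic extension of `s ↦ ((s-1) * ζ(s))^k` to `s = 1` (where its value is `1`). -/
noncomputable def zetaPowAux (k : ℕ) : ℂ → ℂ :=
  Function.update (fun s : ℂ => ((s - 1) * riemannZeta s) ^ k) 1 1

/-- `lam k j` is the Taylor coefficient `λ_{j,k}`, i.e. the `j`-th derivative at `s = 1` of the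
analytic extension of `(s-1)^k ζ(s)^k`; these numbers are real, and we record their real part. -/
noncomputable def lam (k j : ℕ) : ℝ :=
  (iteratedDeriv j (zetaPowAux k) 1).re

/-- The Fourier coefficients `ℓ_{n,k}` for `n ≥ -k` (an integer index). -/
noncomputable def ell (k : ℕ) (n : ℤ) : ℝ :=
  if 1 ≤ n then
    (-1 : ℝ) ^ n.toNat *
      ∑ j ∈ Finset.Icc 1 n.toNat,
        ((n.toNat - 1).choose (j - 1) : ℝ) * lam k (j + k) / (Nat.factorial (j + k))
  else
    (-1 : ℝ) ^ k *
      ∑ j ∈ Finset.range ((k + n).toNat + 1),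
        ((k - j).choose (-n).toNat : ℝ) * (-1 : ℝ) ^ j * lam k j / (Nat.factorial j)

/-- The Lindelöf Hypothesis: `ζ(1/2 + it) = O(|t|^ε)` for every `ε > 0`. -/
def LindelofHypothesis : Prop :=
  ∀ ε : ℝ, 0 < ε → ∃ C : ℝ, ∀ t : ℝ, 1 ≤ |t| →
    ‖riemannZeta (1 / 2 + t * Complex.I)‖ ≤ C * |t| ^ ε

/-- `dk k n` is the Piltz divisor function `d_k(n)`: the number of representations of `n` as an
ordered product of `k` positive integers (the `k`-th Dirichlet-convolution power of `ζ`). -/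
noncomputable def dk (k n : ℕ) : ℕ := (ArithmeticFunction.zeta ^ k) n

/-- The coefficients `a_{j,k}` of the polynomial `P_k`. -/
noncomputable def aCoef (k j : ℕ) : ℝ :=
  (-1 : ℝ) ^ (k - 1 - j) *
    ∑ i ∈ Finset.range (k - 1 - j + 1), (-1 : ℝ) ^ i * lam k i / (Nat.factorial i)

/-- The error term `Δ_k(x) = (Σ_{1 ≤ n ≤ x} d_k(n)) - x P_k(log x)` in the Piltz divisor
problem. -/
noncomputable def Deltak (k : ℕ) (x : ℝ) : ℝ :=
  (∑ n ∈ Finset.Icc 1 ⌊x⌋₊, (dk k n : ℝ)) -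
    x * ∑ j ∈ Finset.range k, aCoef k j / (Nat.factorial j) * (Real.log x) ^ j

/-- The `n`-th Laguerre polynomial. -/
noncomputable def laguerre (n : ℕ) (u : ℝ) : ℝ :=
  ∑ j ∈ Finset.range (n + 1), (n.choose j : ℝ) * (-1 : ℝ) ^ j * u ^ j / (Nat.factorial j)

/-- The Bessel function of the first kind of order `0`. -/
noncomputable def besselJ0 (u : ℝ) : ℝ :=
  ∑' m : ℕ, (-1 : ℝ) ^ m * (u / 2) ^ (2 * m) / ((Nat.factorial m : ℝ) ^ 2)

/-- `φ_k(x) = ∫_1^∞ Δ_k(r) J₀(2 √(x log r)) r⁻² dr`. -/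
noncomputable def phik (k : ℕ) (x : ℝ) : ℝ :=
  ∫ r in Set.Ioi (1 : ℝ), Deltak k r * besselJ0 (2 * Real.sqrt (x * Real.log r)) / r ^ 2

/-!
Substituting `r = e^u` turns `φ_k` into the Hankel transform `x ↦ ∫₀^∞ f(u) J₀(2√(xu)) du` of
`f(u) = Δ_k(e^u) e^{-u}`, and the claim is Plancherel's identity for that transform. The transform
sends `e^{-pu}` to `p⁻¹ e^{-x/p}`; the two families have the same inner products `(p + q)⁻¹`, and
exponentials are total in `L²(0, ∞)` because a function whose Laplace transform vanishes on the
positive integers is zero (Weierstrass, after `t = e^{-u}`).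

Plancherel needs `f ∈ L¹ ∩ L²`, that is, a power saving in the Piltz divisor problem. The hyperbola
method gives one with *some* polynomial in `log x` as main term, and this polynomial is `P_k`
because the Laplace transform of `e^{-u} ∑_{n ≤ e^u} d_k(n)` is `ζ(1 + w)^k / (1 + w)`, whose polar
part at `w = 0` determines it.
-/

/-! ### The Bessel function `J₀` -/

lemma prod_range_mul_pow_div_factorial (x : ℝ) (m : ℕ) :
    (∏ i ∈ Finset.range m, (2 * (i : ℝ) + 1) / (2 * i + 2)) * (x ^ (2 * m) / (2 * m).factorial) =
      (x / 2) ^ (2 * m) / (m.factorial : ℝ) ^ 2 := by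
  induction m with
  | zero => simp
  | succ m ih =>
    have hm : (m : ℝ) + 1 ≠ 0 := by positivity
    have hm' : (2 * m : ℝ) + 1 ≠ 0 := by positivity
    calc _ = (∏ i ∈ Finset.range m, (2 * (i : ℝ) + 1) / (2 * i + 2)) *
            (x ^ (2 * m) / (2 * m).factorial) * ((x / 2) / (m + 1)) ^ 2 := by
          rw [Finset.prod_range_succ, show 2 * (m + 1) = 2 * m + 1 + 1 by ring, Nat.factorial_succ,
            Nat.factorial_succ]
          push_cast
          field_simp
          ring
      _ = _ := by
          rw [ih, Nat.factorial_succ, mul_add, pow_add]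
          push_cast
          field_simp

lemma hasSum_besselJ0_series (x : ℝ) :
    HasSum (fun m : ℕ => (-1 : ℝ) ^ m * (x / 2) ^ (2 * m) / (m.factorial : ℝ) ^ 2)
      (π⁻¹ * ∫ θ in (0 : ℝ)..π, Real.cos (x * Real.sin θ)) := by
  have hsummable : Summable fun m : ℕ => |x| ^ (2 * m) / (2 * m).factorial :=
    (Real.hasSum_cosh |x|).summable
  have hcos := intervalIntegral.hasSum_integral_of_dominated_convergence (a := 0) (b := π)
    (μ := volume)
    (F := fun (m : ℕ) (θ : ℝ) => (-1 : ℝ) ^ m * (x * Real.sin θ) ^ (2 * m) / (2 * m).factorial)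
    (f := fun θ => Real.cos (x * Real.sin θ)) (fun (m : ℕ) _ => |x| ^ (2 * m) / (2 * m).factorial)
    (fun m => Continuous.aestronglyMeasurable (by fun_prop))
    (fun m => ae_of_all _ fun θ _ => by
      simp only [norm_div, norm_mul, norm_pow, norm_neg, norm_one, one_pow, one_mul,
        Real.norm_eq_abs, Nat.abs_cast]
      gcongr
      exact mul_le_of_le_one_right (abs_nonneg x) (Real.abs_sin_le_one θ))
    (ae_of_all _ fun _ _ => hsummable)
    (by simp) (ae_of_all _ fun _ _ => Real.hasSum_cos _)
  have hterm : ∀ m : ℕ,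
      π⁻¹ * ∫ θ in (0 : ℝ)..π, (-1 : ℝ) ^ m * (x * Real.sin θ) ^ (2 * m) / (2 * m).factorial =
        (-1 : ℝ) ^ m * (x / 2) ^ (2 * m) / (m.factorial : ℝ) ^ 2 := fun m => by
    simp only [mul_pow x, ← mul_assoc]
    rw [intervalIntegral.integral_div, intervalIntegral.integral_const_mul, integral_sin_pow_even,
      mul_div_assoc _ ((x / 2) ^ (2 * m)), ← prod_range_mul_pow_div_factorial x m]
    field_simp
  simpa only [hterm] using hcos.mul_left π⁻¹

theorem besselJ0_eq_integral (x : ℝ) :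
    besselJ0 x = π⁻¹ * ∫ θ in (0 : ℝ)..π, Real.cos (x * Real.sin θ) :=
  (hasSum_besselJ0_series x).tsum_eq

lemma hasSum_besselJ0_two_mul_sqrt {t : ℝ} (ht : 0 ≤ t) :
    HasSum (fun m : ℕ => (-t) ^ m / (m.factorial : ℝ) ^ 2) (besselJ0 (2 * Real.sqrt t)) := by
  rw [besselJ0_eq_integral]
  convert hasSum_besselJ0_series (2 * Real.sqrt t) using 2 with m
  rw [mul_div_cancel_left₀ _ two_ne_zero, pow_mul, Real.sq_sqrt ht, neg_pow t]

lemma abs_besselJ0_le_one (x : ℝ) : |besselJ0 x| ≤ 1 := by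
  have hint : ‖∫ θ in (0 : ℝ)..π, Real.cos (x * Real.sin θ)‖ ≤ 1 * |π - 0| :=
    intervalIntegral.norm_integral_le_of_norm_le_const fun _ _ => Real.abs_cos_le_one _
  rw [besselJ0_eq_integral, abs_mul, abs_inv, inv_mul_le_iff₀ (by positivity), mul_one]
  simpa using hint

lemma continuous_besselJ0 : Continuous besselJ0 := by
  rw [funext besselJ0_eq_integral]
  exact continuous_const.mul
    (intervalIntegral.continuous_parametric_intervalIntegral_of_continuous' (by fun_prop) 0 π)

lemma integrableOn_pow_mul_exp_neg_mul {c : ℝ} (hc : 0 < c) (n : ℕ) :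
    IntegrableOn (fun x : ℝ => x ^ n * Real.exp (-c * x)) (Set.Ioi 0) := by
  simpa using integrableOn_rpow_mul_exp_neg_mul_rpow (s := n) (p := 1)
    (neg_one_lt_zero.trans_le n.cast_nonneg) zero_lt_one hc

lemma integral_pow_mul_exp_neg_mul {c : ℝ} (hc : 0 < c) (n : ℕ) :
    ∫ x in Set.Ioi (0 : ℝ), x ^ n * Real.exp (-c * x) = n.factorial / c ^ (n + 1) := by
  have hGamma := Real.integral_rpow_mul_exp_neg_mul_Ioi (a := n + 1) (r := c) (by positivity) hc
  simp only [add_sub_cancel_right, Real.rpow_natCast] at hGamma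
  simp only [neg_mul]
  rw [hGamma, Real.Gamma_nat_eq_factorial, ← Nat.cast_succ, Real.rpow_natCast, one_div, inv_pow,
    inv_mul_eq_div]

theorem integral_besselJ0_mul_exp_neg {p u : ℝ} (hp : 0 < p) (hu : 0 ≤ u) :
    ∫ x in Set.Ioi (0 : ℝ), besselJ0 (2 * Real.sqrt (x * u)) * Real.exp (-p * x) =
      p⁻¹ * Real.exp (-p⁻¹ * u) := by
  let F : ℕ → ℝ → ℝ := fun m x => (-u) ^ m / (m.factorial : ℝ) ^ 2 * (x ^ m * Real.exp (-p * x))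
  have hF_int : ∀ c : ℝ, ∀ m : ℕ, ∫ x in Set.Ioi (0 : ℝ),
      c ^ m / (m.factorial : ℝ) ^ 2 * (x ^ m * Real.exp (-p * x)) =
        p⁻¹ * ((c / p) ^ m / m.factorial) := fun c m => by
    rw [integral_const_mul, integral_pow_mul_exp_neg_mul hp, div_pow]
    field_simp
    ring
  have hF_norm : ∀ m, ∫ x in Set.Ioi (0 : ℝ), ‖F m x‖ = p⁻¹ * ((u / p) ^ m / m.factorial) :=
    fun m => by
      rw [← hF_int]
      refine setIntegral_congr_fun measurableSet_Ioi fun x hx => ?_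
      have hx : 0 ≤ x := (Set.mem_Ioi.1 hx).le
      simp only [F, norm_mul, norm_div, norm_pow, norm_neg, Real.norm_eq_abs,
        Nat.abs_cast, abs_of_nonneg hu, abs_of_nonneg hx, Real.abs_exp]
  have hF_summable : Summable fun m => ∫ x in Set.Ioi (0 : ℝ), ‖F m x‖ := by
    simpa only [hF_norm] using (Real.summable_pow_div_factorial (u / p)).mul_left p⁻¹
  have hsum := hasSum_integral_of_summable_integral_norm
    (fun m => (integrableOn_pow_mul_exp_neg_mul hp m).const_mul _) hF_summable
  have hexp : HasSum (fun m => ∫ x in Set.Ioi (0 : ℝ), F m x) (p⁻¹ * Real.exp (-p⁻¹ * u)) := by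
    have hseries : HasSum (fun m : ℕ => (-u / p) ^ m / m.factorial) (Real.exp (-u / p)) := by
      simpa only [Real.exp_eq_exp_ℝ] using NormedSpace.expSeries_div_hasSum_exp (-u / p)
    simp only [F, hF_int]
    rw [show -p⁻¹ * u = -u / p by ring]
    exact hseries.mul_left p⁻¹
  rw [hexp.unique hsum]
  refine setIntegral_congr_fun measurableSet_Ioi fun x hx => ?_
  rw [← (hasSum_besselJ0_two_mul_sqrt (mul_nonneg (Set.mem_Ioi.1 hx).le hu)).tsum_eq,
    ← tsum_mul_right]
  congr 1 with m
  simp only [neg_mul_eq_mul_neg, mul_pow]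
  ring

/-! ### Injectivity of the Laplace transform -/

lemma integral_mul_comp_eq_zero_of_integral_mul_pow_eq_zero {α : Type*} [MeasurableSpace α]
    {μ : Measure α} {h φ : α → ℝ} {a b : ℝ} (hh : Integrable h μ) (hφ : AEStronglyMeasurable φ μ)
    (hφ_mem : ∀ᵐ x ∂μ, φ x ∈ Set.Icc a b) (hzero : ∀ n : ℕ, ∫ x, h x * φ x ^ n ∂μ = 0)
    {G : ℝ → ℝ} (hG : Continuous G) : ∫ x, h x * G (φ x) ∂μ = 0 := by
  have hint : ∀ {F : ℝ → ℝ}, Continuous F → Integrable (fun x => h x * F (φ x)) μ := by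
    intro F hF
    obtain ⟨C, hC⟩ := isCompact_Icc.exists_bound_of_continuousOn hF.continuousOn (s := Set.Icc a b)
    exact hh.mul_bdd (hF.comp_aestronglyMeasurable hφ) (hφ_mem.mono fun x hx => hC _ hx)
  have hpoly : ∀ P : Polynomial ℝ, ∫ x, h x * P.eval (φ x) ∂μ = 0 := fun P => by
    simp only [Polynomial.eval_eq_sum_range, Finset.mul_sum, mul_left_comm (h _)]
    rw [integral_finsetSum _ fun n _ => (hint (continuous_pow n)).const_mul _]
    simp only [integral_const_mul, hzero, mul_zero, Finset.sum_const_zero]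
  have hbound : ∀ ε > 0, ‖∫ x, h x * G (φ x) ∂μ‖ ≤ ε * ∫ x, ‖h x‖ ∂μ := by
    intro ε hε
    obtain ⟨P, hP⟩ := exists_polynomial_near_of_continuousOn a b G hG.continuousOn ε hε
    rw [← sub_zero (∫ x, h x * G (φ x) ∂μ), ← hpoly P, ← integral_sub (hint hG) (hint P.continuous),
      ← integral_const_mul]
    refine norm_integral_le_of_norm_le (hh.norm.const_mul ε) (hφ_mem.mono fun x hx => ?_)
    rw [← mul_sub, norm_mul, mul_comm ε, norm_sub_rev]
    gcongr
    exact (hP _ hx).le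
  have hlim : Tendsto (fun ε : ℝ => ε * ∫ x, ‖h x‖ ∂μ) (𝓝[>] 0) (𝓝 0) :=
    ((continuous_mul_const _).tendsto' 0 0 (zero_mul _)).mono_left nhdsWithin_le_nhds
  exact norm_le_zero_iff.1 (ge_of_tendsto hlim (eventually_mem_nhdsWithin.mono hbound))

lemma continuous_comp_neg_log {g : ℝ → ℝ} (hg : Continuous g)
    (hg_top : Tendsto g atTop (𝓝 (g 0))) : Continuous fun y => g (-Real.log y) := by
  refine continuous_iff_continuousAt.2 fun y => ?_
  rcases eq_or_ne y 0 with rfl | hy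
  · rw [continuousAt_iff_punctured_nhds, Real.log_zero, neg_zero]
    exact hg_top.comp (tendsto_neg_atBot_atTop.comp Real.tendsto_log_nhdsNE_zero)
  · exact hg.continuousAt.comp (Real.continuousAt_log hy).neg

theorem ae_eq_zero_of_integral_mul_exp_neg_natCast_mul_eq_zero {h : ℝ → ℝ}
    (hh : IntegrableOn h (Set.Ioi 0))
    (hzero : ∀ n : ℕ, ∫ x in Set.Ioi (0 : ℝ), h x * Real.exp (-n * x) = 0) :
    h =ᵐ[volume.restrict (Set.Ioi 0)] 0 := by
  refine (ae_restrict_iff' measurableSet_Ioi).2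
    (isOpen_Ioi.ae_eq_zero_of_integral_contDiff_smul_eq_zero hh.locallyIntegrableOn ?_)
  intro g hg hg_supp hg_tsupp
  have hg_zero : ∀ x ∉ Set.Ioi (0 : ℝ), g x = 0 := fun x hx =>
    image_eq_zero_of_notMem_tsupport fun hx' => hx (hg_tsupp hx')
  have hg_top : Tendsto g atTop (𝓝 (g 0)) := by
    rw [hg_zero 0 Set.self_notMem_Ioi]
    exact hg_supp.is_zero_at_infty.mono_left atTop_le_cocompact
  have hexp_mem : ∀ᵐ x ∂volume.restrict (Set.Ioi (0 : ℝ)), Real.exp (-x) ∈ Set.Icc 0 1 :=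
    ae_restrict_of_forall_mem measurableSet_Ioi fun x hx =>
      ⟨(Real.exp_pos _).le, Real.exp_le_one_iff.2 (neg_nonpos.2 (Set.mem_Ioi.1 hx).le)⟩
  have hG := integral_mul_comp_eq_zero_of_integral_mul_pow_eq_zero hh
    (by fun_prop : Continuous fun x : ℝ => Real.exp (-x)).aestronglyMeasurable hexp_mem
    (by simpa only [← Real.exp_nat_mul, neg_mul, mul_neg] using hzero)
    (continuous_comp_neg_log hg.continuous hg_top)
  simp only [Real.log_exp, neg_neg] at hG
  simp only [smul_eq_mul, mul_comm (g _)]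
  rw [← setIntegral_eq_integral_of_forall_compl_eq_zero, hG]
  intro x hx
  rw [hg_zero x hx, mul_zero]

theorem ae_eq_zero_of_integral_mul_exp_neg_eq_zero {h : ℝ → ℝ}
    (hh : IntegrableOn (fun x => h x * Real.exp (-x)) (Set.Ioi 0))
    (hzero : ∀ p > 0, ∫ x in Set.Ioi (0 : ℝ), h x * Real.exp (-p * x) = 0) :
    h =ᵐ[volume.restrict (Set.Ioi 0)] 0 := by
  refine (ae_eq_zero_of_integral_mul_exp_neg_natCast_mul_eq_zero hh fun n => ?_).mono fun x hx => ?_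
  · have hexp : ∀ x : ℝ, h x * Real.exp (-x) * Real.exp (-n * x) =
        h x * Real.exp (-(n + 1) * x) := fun x => by
      rw [mul_assoc, ← Real.exp_add]
      ring_nf
    simpa only [hexp] using hzero (n + 1) n.cast_add_one_pos
  · exact (mul_eq_zero.1 hx).resolve_right (Real.exp_pos _).ne'

/-! ### The Hankel transform is an isometry -/

open scoped InnerProductSpace in
lemma exists_linearIsometry_of_inner_eq {𝕜 E F ι : Type*} [RCLike 𝕜] [NormedAddCommGroup E]
    [InnerProductSpace 𝕜 E] [NormedAddCommGroup F] [InnerProductSpace 𝕜 F] [CompleteSpace F]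
    {v : ι → E} {w : ι → F} (hvw : ∀ i j, ⟪w i, w j⟫_𝕜 = ⟪v i, v j⟫_𝕜)
    (hv : Dense (Submodule.span 𝕜 (Set.range v) : Set E)) :
    ∃ U : E →ₗᵢ[𝕜] F, ∀ i, U (v i) = w i := by
  let V := Finsupp.linearCombination 𝕜 v
  let W := Finsupp.linearCombination 𝕜 w
  have hV : DenseRange V := by
    rwa [DenseRange, ← LinearMap.coe_range, Finsupp.range_linearCombination]
  have hinner : ∀ x y, ⟪W x, W y⟫_𝕜 = ⟪V x, V y⟫_𝕜 := fun x y => by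
    simp only [V, W, Finsupp.linearCombination_apply, Finsupp.sum_inner, Finsupp.inner_sum,
      inner_smul_left, inner_smul_right, hvw]
  have hnorm : ∀ x, ‖W x‖ = ‖V x‖ := fun x => by
    rw [@norm_eq_sqrt_re_inner 𝕜, @norm_eq_sqrt_re_inner 𝕜, hinner]
  have hWV : ∃ C, ∀ x, ‖W x‖ ≤ C * ‖V x‖ := ⟨1, fun x => by rw [hnorm, one_mul]⟩
  refine ⟨⟨(W.extendOfNorm V).toLinearMap, fun x => ?_⟩, fun i => ?_⟩
  · refine hV.induction_on x (isClosed_eq (by fun_prop) continuous_norm) fun y => ?_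
    rw [ContinuousLinearMap.coe_coe, LinearMap.extendOfNorm_eq hV hWV, hnorm]
  · have := LinearMap.extendOfNorm_eq hV hWV (Finsupp.single i 1)
    simpa [V, W] using this

lemma integrableOn_exp_neg_mul {p : ℝ} (hp : 0 < p) :
    IntegrableOn (fun x : ℝ => Real.exp (-p * x)) (Set.Ioi 0) :=
  integrableOn_exp_mul_Ioi (neg_neg_of_pos hp) 0

lemma memLp_exp_neg_mul {p : ℝ} (hp : 0 < p) :
    MemLp (fun x : ℝ => Real.exp (-p * x)) 2 (volume.restrict (Set.Ioi 0)) := by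
  have hsq : ∀ x : ℝ, Real.exp (-p * x) ^ 2 = Real.exp (-(2 * p) * x) := fun x => by
    rw [← Real.exp_nat_mul]
    ring_nf
  rw [memLp_two_iff_integrable_sq (by fun_prop)]
  simp only [hsq]
  exact integrableOn_exp_neg_mul (by positivity)

/-- The exponential `x ↦ e^{-px}`, `p > 0`, as an element of `L²(0, ∞)`. -/
noncomputable def expNegLp (p : {p : ℝ // 0 < p}) : Lp ℝ 2 (volume.restrict (Set.Ioi (0 : ℝ))) :=
  (memLp_exp_neg_mul p.2).toLp

lemma inner_toLp_toLp {α : Type*} [MeasurableSpace α] {μ : Measure α} {f g : α → ℝ}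
    (hf : MemLp f 2 μ) (hg : MemLp g 2 μ) :
    inner ℝ (hf.toLp f) (hg.toLp g) = ∫ x, f x * g x ∂μ := by
  rw [L2.inner_def]
  refine integral_congr_ae ?_
  filter_upwards [hf.coeFn_toLp, hg.coeFn_toLp] with x hfx hgx
  rw [hfx, hgx, RCLike.inner_apply, conj_trivial, mul_comm]

lemma inner_expNegLp (F : Lp ℝ 2 (volume.restrict (Set.Ioi (0 : ℝ)))) (p : {p : ℝ // 0 < p}) :
    inner ℝ F (expNegLp p) = ∫ x in Set.Ioi (0 : ℝ), F x * Real.exp (-p * x) := by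
  rw [expNegLp, ← inner_toLp_toLp (Lp.memLp F), Lp.toLp_coeFn]

lemma inner_expNegLp_expNegLp (p q : {p : ℝ // 0 < p}) :
    inner ℝ (expNegLp p) (expNegLp q) = ((p : ℝ) + q)⁻¹ := by
  have hpq : 0 < (p : ℝ) + q := add_pos p.2 q.2
  rw [expNegLp, expNegLp, inner_toLp_toLp]
  simp only [← Real.exp_add, ← add_mul, ← neg_add]
  rw [integral_exp_mul_Ioi (neg_neg_of_pos hpq), mul_zero, Real.exp_zero, neg_div_neg_eq, one_div]

lemma dense_span_range_expNegLp :
    Dense (Submodule.span ℝ (Set.range expNegLp) :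
      Set (Lp ℝ 2 (volume.restrict (Set.Ioi (0 : ℝ))))) := by
  rw [Submodule.dense_iff_topologicalClosure_eq_top, Submodule.topologicalClosure_eq_top_iff,
    eq_bot_iff]
  intro F hF
  refine (Lp.eq_zero_iff_ae_eq_zero).2 (ae_eq_zero_of_integral_mul_exp_neg_eq_zero ?_ ?_)
  · simpa [IntegrableOn, Pi.mul_def] using
      (Lp.memLp F).integrable_mul (memLp_exp_neg_mul one_pos)
  · intro p hp
    rw [← inner_expNegLp F ⟨p, hp⟩]
    exact Submodule.inner_left_of_mem_orthogonal (Submodule.subset_span (Set.mem_range_self _)) hF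

lemma exists_linearIsometry_expNegLp :
    ∃ U : Lp ℝ 2 (volume.restrict (Set.Ioi (0 : ℝ))) →ₗᵢ[ℝ]
        Lp ℝ 2 (volume.restrict (Set.Ioi (0 : ℝ))),
      ∀ p : {p : ℝ // 0 < p}, U (expNegLp p) = (p : ℝ)⁻¹ • expNegLp p⁻¹ := by
  refine exists_linearIsometry_of_inner_eq (fun p q => ?_) dense_span_range_expNegLp
  have hp : (p : ℝ) ≠ 0 := p.2.ne'
  have hq : (q : ℝ) ≠ 0 := q.2.ne'
  rw [inner_smul_left, inner_smul_right, inner_expNegLp_expNegLp, inner_expNegLp_expNegLp,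
    Positive.coe_inv, Positive.coe_inv, conj_trivial, ← mul_inv, ← mul_inv]
  field_simp
  ring

/-- The Hankel transform of order `0`, in the variables for which its kernel is
`J₀(2 √(xu))`. -/
noncomputable def hankelTransform (f : ℝ → ℝ) (x : ℝ) : ℝ :=
  ∫ u in Set.Ioi (0 : ℝ), f u * besselJ0 (2 * Real.sqrt (x * u))

lemma norm_hankelTransform_le {f : ℝ → ℝ} (hf : IntegrableOn f (Set.Ioi 0)) (x : ℝ) :
    ‖hankelTransform f x‖ ≤ ∫ u in Set.Ioi (0 : ℝ), ‖f u‖ := by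
  refine norm_integral_le_of_norm_le hf.norm (ae_of_all _ fun u => ?_)
  rw [norm_mul]
  exact mul_le_of_le_one_right (norm_nonneg _) (abs_besselJ0_le_one _)

lemma continuous_hankelTransform {f : ℝ → ℝ} (hf : IntegrableOn f (Set.Ioi 0)) :
    Continuous (hankelTransform f) := by
  refine continuous_of_dominated (bound := fun u => ‖f u‖) (fun x => ?_) (fun x => ?_) hf.norm ?_
  · exact hf.aestronglyMeasurable.mul
      (continuous_besselJ0.comp (by fun_prop)).aestronglyMeasurable
  · refine ae_of_all _ fun u => ?_
    rw [norm_mul]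
    exact mul_le_of_le_one_right (norm_nonneg _) (abs_besselJ0_le_one _)
  · exact ae_of_all _ fun u => continuous_const.mul (continuous_besselJ0.comp (by fun_prop))

theorem integral_hankelTransform_mul_exp_neg {f : ℝ → ℝ} (hf : IntegrableOn f (Set.Ioi 0)) {p : ℝ}
    (hp : 0 < p) :
    ∫ x in Set.Ioi (0 : ℝ), hankelTransform f x * Real.exp (-p * x) =
      p⁻¹ * ∫ u in Set.Ioi (0 : ℝ), f u * Real.exp (-p⁻¹ * u) := by
  have hint : Integrable (fun z : ℝ × ℝ =>
      besselJ0 (2 * Real.sqrt (z.1 * z.2)) * (Real.exp (-p * z.1) * f z.2))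
      ((volume.restrict (Set.Ioi 0)).prod (volume.restrict (Set.Ioi 0))) :=
    ((integrableOn_exp_neg_mul hp).mul_prod hf).bdd_mul (c := 1)
      (continuous_besselJ0.comp (by fun_prop)).aestronglyMeasurable
      (ae_of_all _ fun z => abs_besselJ0_le_one _)
  calc ∫ x in Set.Ioi (0 : ℝ), hankelTransform f x * Real.exp (-p * x)
      = ∫ x in Set.Ioi (0 : ℝ), ∫ u in Set.Ioi (0 : ℝ),
          besselJ0 (2 * Real.sqrt (x * u)) * (Real.exp (-p * x) * f u) := by
        simp only [hankelTransform, ← integral_mul_const]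
        congr! 4
        ring
    _ = ∫ u in Set.Ioi (0 : ℝ), f u * ∫ x in Set.Ioi (0 : ℝ),
          besselJ0 (2 * Real.sqrt (x * u)) * Real.exp (-p * x) := by
        rw [integral_integral_swap hint]
        simp only [← integral_const_mul]
        congr! 4
        ring
    _ = p⁻¹ * ∫ u in Set.Ioi (0 : ℝ), f u * Real.exp (-p⁻¹ * u) := by
        rw [← integral_const_mul]
        refine setIntegral_congr_fun measurableSet_Ioi fun u hu => ?_
        rw [integral_besselJ0_mul_exp_neg hp (Set.mem_Ioi.1 hu).le]
        ring

lemma inner_map_expNegLp_of_map_eq {U : Lp ℝ 2 (volume.restrict (Set.Ioi (0 : ℝ))) →ₗᵢ[ℝ]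
      Lp ℝ 2 (volume.restrict (Set.Ioi (0 : ℝ)))}
    (hU : ∀ p : {p : ℝ // 0 < p}, U (expNegLp p) = (p : ℝ)⁻¹ • expNegLp p⁻¹)
    (F : Lp ℝ 2 (volume.restrict (Set.Ioi (0 : ℝ)))) (p : {p : ℝ // 0 < p}) :
    inner ℝ (U F) (expNegLp p) = (p : ℝ)⁻¹ * inner ℝ F (expNegLp p⁻¹) := by
  rw [← U.inner_map_map F, hU, inv_inv, Positive.coe_inv, inv_inv, inner_smul_right,
    inv_mul_cancel_left₀ p.2.ne']

lemma hankelTransform_ae_eq {U : Lp ℝ 2 (volume.restrict (Set.Ioi (0 : ℝ))) →ₗᵢ[ℝ]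
      Lp ℝ 2 (volume.restrict (Set.Ioi (0 : ℝ)))}
    (hU : ∀ p : {p : ℝ // 0 < p}, U (expNegLp p) = (p : ℝ)⁻¹ • expNegLp p⁻¹) {f : ℝ → ℝ}
    (hf : IntegrableOn f (Set.Ioi 0)) (hf_sq : MemLp f 2 (volume.restrict (Set.Ioi 0))) :
    U (hf_sq.toLp f) =ᵐ[volume.restrict (Set.Ioi 0)] hankelTransform f := by
  have hint_U : ∀ p > 0, IntegrableOn (fun x => U (hf_sq.toLp f) x * Real.exp (-p * x))
      (Set.Ioi 0) := fun p hp => (Lp.memLp _).integrable_mul (memLp_exp_neg_mul hp)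
  have hint_H : ∀ p > 0, IntegrableOn (fun x => hankelTransform f x * Real.exp (-p * x))
      (Set.Ioi 0) := fun p hp => (integrableOn_exp_neg_mul hp).bdd_mul
    (continuous_hankelTransform hf).aestronglyMeasurable
    (ae_of_all _ (norm_hankelTransform_le hf))
  have hdiff : (fun x => U (hf_sq.toLp f) x - hankelTransform f x)
      =ᵐ[volume.restrict (Set.Ioi 0)] 0 := by
    refine ae_eq_zero_of_integral_mul_exp_neg_eq_zero ?_ fun p hp => ?_
    · simpa only [sub_mul, neg_mul, one_mul] using! (hint_U 1 one_pos).sub (hint_H 1 one_pos)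
    · simp only [sub_mul]
      rw [integral_sub (hint_U p hp) (hint_H p hp), ← inner_expNegLp _ ⟨p, hp⟩,
        inner_map_expNegLp_of_map_eq hU, integral_hankelTransform_mul_exp_neg hf hp, expNegLp,
        inner_toLp_toLp, Positive.coe_inv, sub_self]
  exact hdiff.mono fun x hx => sub_eq_zero.1 hx

theorem hankel_plancherel {f : ℝ → ℝ} (hf : IntegrableOn f (Set.Ioi 0))
    (hf_sq : MemLp f 2 (volume.restrict (Set.Ioi 0))) :
    MemLp (hankelTransform f) 2 (volume.restrict (Set.Ioi 0)) ∧
      ∫ x in Set.Ioi (0 : ℝ), hankelTransform f x ^ 2 = ∫ u in Set.Ioi (0 : ℝ), f u ^ 2 := by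
  obtain ⟨U, hU⟩ := exists_linearIsometry_expNegLp
  have hUf := hankelTransform_ae_eq hU hf hf_sq
  have hH_sq := (Lp.memLp (U (hf_sq.toLp f))).ae_eq hUf
  have hH_toLp : hH_sq.toLp _ = U (hf_sq.toLp f) := by
    rw [← Lp.toLp_coeFn (U (hf_sq.toLp f)) (Lp.memLp _)]
    exact MemLp.toLp_congr _ _ hUf.symm
  refine ⟨hH_sq, ?_⟩
  simp only [pow_two]
  rw [← inner_toLp_toLp hH_sq hH_sq, hH_toLp, U.inner_map_map, inner_toLp_toLp]

/-! ### Functions approximated by a polynomial in `log x` -/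

/-- `g x = Q (log x) + O(x ^ (-δ))` on `[1, ∞)` for some `δ > 0`: up to a power saving, `g` is the
polynomial `Q` in `log x`. -/
def IsLogPolyApprox (Q : Polynomial ℝ) (g : ℝ → ℝ) : Prop :=
  ∃ δ : ℝ, 0 < δ ∧ (fun x => g x - Q.eval (Real.log x)) =O[𝓟 (Set.Ici 1)] fun x => x ^ (-δ)

/-- `g` is, up to a power saving, some polynomial in `log x`. -/
def HasLogPolyApprox (g : ℝ → ℝ) : Prop :=
  ∃ Q : Polynomial ℝ, IsLogPolyApprox Q g

lemma isBigO_rpow_of_le {a b : ℝ} (hab : a ≤ b) :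
    (fun x : ℝ => x ^ a) =O[𝓟 (Set.Ici 1)] fun x => x ^ b := by
  refine isBigO_principal.2 ⟨1, fun x (hx : 1 ≤ x) => ?_⟩
  rw [one_mul, Real.norm_of_nonneg (by positivity), Real.norm_of_nonneg (by positivity)]
  exact Real.rpow_le_rpow_of_exponent_le hx hab

lemma isBigO_mul_rpow {f g : ℝ → ℝ} {a b c : ℝ} (hf : f =O[𝓟 (Set.Ici 1)] fun x => x ^ a)
    (hg : g =O[𝓟 (Set.Ici 1)] fun x => x ^ b) (habc : a + b ≤ c) :
    (fun x => f x * g x) =O[𝓟 (Set.Ici 1)] fun x => x ^ c := by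
  refine ((hf.mul hg).congr' EventuallyEq.rfl ?_).trans (isBigO_rpow_of_le habc)
  exact eventually_principal.2 fun x (hx : 1 ≤ x) => (Real.rpow_add (by positivity) a b).symm

lemma isBigO_eval_log (Q : Polynomial ℝ) {η : ℝ} (hη : 0 < η) :
    (fun x : ℝ => Q.eval (Real.log x)) =O[𝓟 (Set.Ici 1)] fun x => x ^ η := by
  induction Q using Polynomial.induction_on' with
  | add p q hp hq => simpa only [Polynomial.eval_add] using hp.add hq
  | monomial n a =>
    refine isBigO_principal.2 ⟨|a| * (n.factorial / η ^ n), fun x (hx : 1 ≤ x) => ?_⟩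
    have hlog : 0 ≤ Real.log x := Real.log_nonneg hx
    have hexp := Real.pow_div_factorial_le_exp (η * Real.log x) (by positivity) n
    rw [mul_comm η, ← Real.rpow_def_of_pos (by positivity), div_le_iff₀ (by positivity),
      mul_pow, ← le_div_iff₀ (by positivity)] at hexp
    rw [Polynomial.eval_monomial, norm_mul, Real.norm_eq_abs, Real.norm_of_nonneg (by positivity),
      Real.norm_of_nonneg (by positivity), mul_assoc]
    gcongr
    exact hexp.trans_eq (by ring)

namespace HasLogPolyApprox

variable {f g : ℝ → ℝ}

lemma of_isBigO {δ : ℝ} (hδ : 0 < δ) (hg : g =O[𝓟 (Set.Ici 1)] fun x => x ^ (-δ)) :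
    HasLogPolyApprox g :=
  ⟨0, δ, hδ, by simpa using hg⟩

lemma congr (hf : HasLogPolyApprox f) (hfg : ∀ x, 1 ≤ x → g x = f x) : HasLogPolyApprox g := by
  obtain ⟨Q, δ, hδ, hQ⟩ := hf
  exact ⟨Q, δ, hδ, hQ.congr' (eventually_principal.2 fun x hx => by simp only [hfg x hx])
    EventuallyEq.rfl⟩

lemma eval_log (Q : Polynomial ℝ) : HasLogPolyApprox fun x => Q.eval (Real.log x) :=
  ⟨Q, 1, one_pos, by simpa using isBigO_zero _ _⟩

lemma const (c : ℝ) : HasLogPolyApprox fun _ => c := by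
  simpa using eval_log (Polynomial.C c)

lemma log_pow (n : ℕ) : HasLogPolyApprox fun x => Real.log x ^ n := by
  simpa using eval_log (Polynomial.X ^ n)

lemma isBigO_rpow (hg : HasLogPolyApprox g) {η : ℝ} (hη : 0 < η) :
    g =O[𝓟 (Set.Ici 1)] fun x => x ^ η := by
  obtain ⟨Q, δ, hδ, hQ⟩ := hg
  simpa using (hQ.trans (isBigO_rpow_of_le (by linarith : -δ ≤ η))).add (isBigO_eval_log Q hη)

lemma add (hf : HasLogPolyApprox f) (hg : HasLogPolyApprox g) :
    HasLogPolyApprox fun x => f x + g x := by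
  obtain ⟨P, δ, hδ, hP⟩ := hf
  obtain ⟨Q, ε, hε, hQ⟩ := hg
  refine ⟨P + Q, min δ ε, lt_min hδ hε, ?_⟩
  refine ((hP.trans (isBigO_rpow_of_le (neg_le_neg (min_le_left δ ε)))).add
    (hQ.trans (isBigO_rpow_of_le (neg_le_neg (min_le_right δ ε))))).congr_left fun x => ?_
  rw [Polynomial.eval_add]
  ring

lemma mul_of_isBigO {δ : ℝ} (hδ : 0 < δ) (hf : f =O[𝓟 (Set.Ici 1)] fun x => x ^ (-δ))
    (hg : HasLogPolyApprox g) : HasLogPolyApprox fun x => f x * g x :=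
  of_isBigO (half_pos hδ) (isBigO_mul_rpow hf (hg.isBigO_rpow (half_pos hδ)) (by linarith))

lemma mul (hf : HasLogPolyApprox f) (hg : HasLogPolyApprox g) :
    HasLogPolyApprox fun x => f x * g x := by
  obtain ⟨P, δ, hδ, hP⟩ := hf
  obtain ⟨Q, ε, hε, hQ⟩ := id hg
  refine (((eval_log (P * Q)).add (mul_of_isBigO hε hQ (eval_log P))).add
    (mul_of_isBigO hδ hP hg)).congr fun x _ => ?_
  rw [Polynomial.eval_mul]
  ring

lemma const_mul (c : ℝ) (hf : HasLogPolyApprox f) : HasLogPolyApprox fun x => c * f x :=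
  (const c).mul hf

lemma sub (hf : HasLogPolyApprox f) (hg : HasLogPolyApprox g) :
    HasLogPolyApprox fun x => f x - g x :=
  (hf.add (hg.const_mul (-1))).congr fun x _ => by ring

lemma sum {ι : Type*} {f : ι → ℝ → ℝ} (s : Finset ι) (hf : ∀ i ∈ s, HasLogPolyApprox (f i)) :
    HasLogPolyApprox fun x => ∑ i ∈ s, f i x := by
  induction s using Finset.cons_induction with
  | empty => simpa using const 0
  | cons a s ha ih =>
    simp only [Finset.sum_cons]
    exact (hf a (Finset.mem_cons_self a s)).add (ih fun i hi => hf i (Finset.mem_cons_of_mem hi))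

lemma comp_sqrt (hf : HasLogPolyApprox f) : HasLogPolyApprox fun x => f (Real.sqrt x) := by
  obtain ⟨Q, δ, hδ, hQ⟩ := hf
  obtain ⟨C, hC⟩ := isBigO_principal.1 hQ
  refine ⟨Q.comp (Polynomial.C (1 / 2) * Polynomial.X), δ / 2, half_pos hδ,
    isBigO_principal.2 ⟨C, fun x (hx : 1 ≤ x) => ?_⟩⟩
  have hsqrt : Real.sqrt x ^ (-δ) = x ^ (-(δ / 2)) := by
    rw [Real.sqrt_eq_rpow, ← Real.rpow_mul (by positivity)]
    ring_nf
  simpa [Real.log_sqrt (by positivity : 0 ≤ x), hsqrt, div_eq_inv_mul] using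
    hC (Real.sqrt x) (Real.one_le_sqrt.2 hx)

end HasLogPolyApprox

lemma exists_polynomial_derivative_eq (Q : Polynomial ℝ) :
    ∃ R : Polynomial ℝ, Polynomial.derivative R = Q := by
  induction Q using Polynomial.induction_on' with
  | add p q hp hq =>
    obtain ⟨R, rfl⟩ := hp
    obtain ⟨S, rfl⟩ := hq
    exact ⟨R + S, Polynomial.derivative_add⟩
  | monomial n a =>
    refine ⟨Polynomial.monomial (n + 1) (a / (n + 1)), ?_⟩
    rw [Polynomial.derivative_monomial, Nat.add_sub_cancel, Nat.cast_add_one,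
      div_mul_cancel₀ a n.cast_add_one_ne_zero]

lemma integrableOn_eval_log_div (Q : Polynomial ℝ) (x : ℝ) :
    IntegrableOn (fun t => Q.eval (Real.log t) / t) (Set.Ioc 1 x) := by
  have hne : ∀ t ∈ Set.Icc 1 x, t ≠ 0 := fun t ht => (one_pos.trans_le ht.1).ne'
  have hcont : ContinuousOn (fun t => Q.eval (Real.log t) / t) (Set.Icc 1 x) :=
    (Q.continuous.comp_continuousOn (Real.continuousOn_log.mono hne)).div continuousOn_id hne
  exact hcont.integrableOn_Icc.mono_set Set.Ioc_subset_Icc_self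

lemma integral_eval_log_derivative_div (R : Polynomial ℝ) {x : ℝ} (hx : 1 ≤ x) :
    ∫ t in Set.Ioc 1 x, (Polynomial.derivative R).eval (Real.log t) / t =
      R.eval (Real.log x) - R.eval 0 := by
  rw [← intervalIntegral.integral_of_le hx,
    intervalIntegral.integral_eq_sub_of_hasDerivAt (f := fun t => R.eval (Real.log t)),
    Real.log_one]
  · intro t ht
    rw [Set.uIcc_of_le hx] at ht
    exact (R.hasDerivAt (Real.log t)).comp t (Real.hasDerivAt_log (one_pos.trans_le ht.1).ne')
  · exact (intervalIntegrable_iff_integrableOn_Ioc_of_le hx).2 (integrableOn_eval_log_div _ x)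

lemma integrableOn_Ioi_of_isBigO_rpow {f : ℝ → ℝ} (hf : AEStronglyMeasurable f) {a : ℝ}
    (ha : a < -1) (hfa : f =O[𝓟 (Set.Ici 1)] fun t => t ^ a) : IntegrableOn f (Set.Ioi 1) := by
  obtain ⟨C, hC⟩ := isBigO_principal.1 hfa
  refine ((integrableOn_Ioi_rpow_of_lt ha one_pos).norm.const_mul C).mono' hf.restrict ?_
  exact (ae_restrict_iff' measurableSet_Ioi).2 (ae_of_all _ fun t (ht : 1 < t) => hC t ht.le)

lemma isBigO_integral_Ioi_of_isBigO_rpow {f : ℝ → ℝ} {a : ℝ} (ha : a < -1)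
    (hfa : f =O[𝓟 (Set.Ici 1)] fun t => t ^ a) :
    (fun x => ∫ t in Set.Ioi x, f t) =O[𝓟 (Set.Ici 1)] fun x => x ^ (a + 1) := by
  obtain ⟨C, hC⟩ := isBigO_principal.1 hfa
  refine isBigO_principal.2 ⟨C * (-(a + 1))⁻¹, fun x (hx : 1 ≤ x) => ?_⟩
  have hx0 : 0 < x := by positivity
  calc ‖∫ t in Set.Ioi x, f t‖
      ≤ ∫ t in Set.Ioi x, C * t ^ a := by
        refine norm_integral_le_of_norm_le ((integrableOn_Ioi_rpow_of_lt ha hx0).const_mul C) ?_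
        refine (ae_restrict_iff' measurableSet_Ioi).2 (ae_of_all _ fun t (ht : x < t) => ?_)
        simpa only [Real.norm_of_nonneg (Real.rpow_nonneg (hx0.trans ht).le a)] using
          hC t (hx.trans ht.le)
    _ = C * (-(a + 1))⁻¹ * ‖x ^ (a + 1)‖ := by
        rw [integral_const_mul, integral_Ioi_rpow_of_lt ha hx0,
          Real.norm_of_nonneg (Real.rpow_nonneg hx0.le _), neg_div, ← div_neg, div_eq_inv_mul,
          mul_assoc]

-- The constant term of the new polynomial is the full integral of the error over `(1, ∞)`,
-- so that only its tail over `(x, ∞)` remains.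
lemma HasLogPolyApprox.integral_div {g : ℝ → ℝ} (hg_meas : Measurable g)
    (hg : HasLogPolyApprox g) : HasLogPolyApprox fun x => ∫ t in Set.Ioc 1 x, g t / t := by
  obtain ⟨Q, δ, hδ, hQ⟩ := hg
  obtain ⟨R, rfl⟩ := exists_polynomial_derivative_eq Q
  set E : ℝ → ℝ := fun t => (g t - (Polynomial.derivative R).eval (Real.log t)) * t ^ (-1 : ℝ)
  have hE_bigO : E =O[𝓟 (Set.Ici 1)] fun t => t ^ (-δ - 1) :=
    isBigO_mul_rpow hQ (isBigO_refl _ _) le_rfl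
  have hE_meas : Measurable E :=
    (hg_meas.sub ((Polynomial.derivative R).continuous.measurable.comp Real.measurable_log)).mul
      (measurable_id.pow_const _)
  have hE : IntegrableOn E (Set.Ioi 1) :=
    integrableOn_Ioi_of_isBigO_rpow hE_meas.aestronglyMeasurable (by linarith) hE_bigO
  have hsplit : ∀ t, g t / t = (Polynomial.derivative R).eval (Real.log t) / t + E t := fun t => by
    simp only [E, Real.rpow_neg_one]
    ring
  have hR : HasLogPolyApprox fun x => R.eval (Real.log x) + (-R.eval 0 + ∫ t in Set.Ioi 1, E t) :=
    (eval_log R).add (const _)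
  have htail : HasLogPolyApprox fun x => ∫ t in Set.Ioi x, E t :=
    of_isBigO hδ (by simpa using isBigO_integral_Ioi_of_isBigO_rpow (by linarith) hE_bigO)
  refine (hR.sub htail).congr fun x hx => ?_
  have hE_Ioc : IntegrableOn E (Set.Ioc 1 x) := hE.mono_set Set.Ioc_subset_Ioi_self
  simp only [hsplit]
  rw [integral_add (integrableOn_eval_log_div _ x) hE_Ioc, integral_eval_log_derivative_div R hx,
    ← Set.Ioc_union_Ioi_eq_Ioi hx, setIntegral_union (Set.Ioc_disjoint_Ioi le_rfl)
      measurableSet_Ioi hE_Ioc (hE.mono_set (Set.Ioi_subset_Ioi hx))]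
  ring

/-! ### Summatory functions and the hyperbola method -/

/-- The summatory function `x ↦ ∑_{1 ≤ n ≤ x} c n`; the value `c 0` is ignored. -/
noncomputable def summatory (c : ℕ → ℝ) (x : ℝ) : ℝ := ∑ n ∈ Finset.Icc 1 ⌊x⌋₊, c n

lemma measurable_summatory (c : ℕ → ℝ) : Measurable (summatory c) :=
  (measurable_from_top (f := fun N : ℕ => ∑ n ∈ Finset.Icc 1 N, c n)).comp Nat.measurable_floor

lemma measurable_summatory_div (c : ℕ → ℝ) : Measurable fun x => summatory c x / x :=
  (measurable_summatory c).div measurable_id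

lemma summatory_mul_eq_sub_integral (c : ℕ → ℝ) {f f' : ℝ → ℝ}
    (hf : ∀ t, 1 ≤ t → HasDerivAt f (f' t) t) (hf' : ContinuousOn f' (Set.Ici 1)) (x : ℝ) :
    summatory (fun n => f n * c n) x =
      f x * summatory c x - ∫ t in Set.Ioc 1 x, f' t * summatory c t := by
  set c₀ : ℕ → ℝ := Function.update c 0 0
  have hc₀ : ∀ (d : ℕ → ℝ) (N : ℕ),
      ∑ n ∈ Finset.Icc 0 N, d n * c₀ n = ∑ n ∈ Finset.Icc 1 N, d n * c n := fun d N => by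
    rw [← Finset.insert_Icc_add_one_left_eq_Icc N.zero_le, Finset.sum_insert (by simp)]
    simp only [c₀, Function.update_self, mul_zero, zero_add]
    refine Finset.sum_congr rfl fun n hn => ?_
    rw [Function.update_of_ne (Nat.one_le_iff_ne_zero.1 (Finset.mem_Icc.1 hn).1)]
  have hderiv : Set.EqOn (deriv f) f' (Set.Icc 1 x) := fun t ht => (hf t ht.1).deriv
  have habel := sum_mul_eq_sub_integral_mul₀ (f := f) c₀ (Function.update_self ..) x
    (fun t ht => (hf t ht.1).differentiableAt)
    ((hf'.mono Set.Icc_subset_Ici_self).integrableOn_Icc.congr_fun hderiv.symm measurableSet_Icc)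
  have hsum : ∀ N, ∑ n ∈ Finset.Icc 0 N, c₀ n = ∑ n ∈ Finset.Icc 1 N, c n := fun N => by
    simpa using hc₀ 1 N
  simp only [hc₀ (fun n => f n), hsum] at habel
  rw [summatory, habel, summatory]
  congr 1
  refine setIntegral_congr_fun measurableSet_Ioc fun t ht => ?_
  simp only [hderiv (Set.Ioc_subset_Icc_self ht), summatory]

lemma HasLogPolyApprox.summatory_div {c : ℕ → ℝ}
    (hc : HasLogPolyApprox fun x => summatory c x / x) :
    HasLogPolyApprox (summatory fun n => c n / n) := by
  refine (hc.add (hc.integral_div (measurable_summatory_div c))).congr fun x _ => ?_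
  have habel := summatory_mul_eq_sub_integral c (f := fun t => t⁻¹) (f' := fun t => -(t ^ 2)⁻¹)
    (fun t ht => hasDerivAt_inv (one_pos.trans_le ht).ne')
    ((continuousOn_pow 2).inv₀ fun t (ht : 1 ≤ t) => by positivity).neg x
  simp only [← div_eq_inv_mul] at habel
  rw [habel, sub_eq_add_neg, ← integral_neg]
  congr 1
  refine integral_congr_ae (ae_of_all _ fun t => ?_)
  ring

lemma HasLogPolyApprox.summatory_log_pow_mul {c : ℕ → ℝ} (hc : HasLogPolyApprox (summatory c))
    (j : ℕ) : HasLogPolyApprox (summatory fun n => Real.log n ^ j * c n) := by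
  cases j with
  | zero => simpa using hc
  | succ j =>
    have hint : HasLogPolyApprox fun x =>
        ∫ t in Set.Ioc 1 x, (j + 1 : ℝ) * (Real.log t ^ j * summatory c t) / t :=
      (((log_pow j).mul hc).const_mul (j + 1 : ℝ)).integral_div
        (((Real.measurable_log.pow_const j).mul (measurable_summatory c)).const_mul _)
    refine (((log_pow (j + 1)).mul hc).sub hint).congr fun x _ => ?_
    have hne : ∀ t : ℝ, 1 ≤ t → t ≠ 0 := fun t ht => (one_pos.trans_le ht).ne'
    rw [summatory_mul_eq_sub_integral c (f := fun t => Real.log t ^ (j + 1))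
      (f' := fun t => (j + 1 : ℝ) * Real.log t ^ j * t⁻¹)
      (fun t ht => by simpa using (Real.hasDerivAt_log (hne t ht)).fun_pow (j + 1))
      ((continuousOn_const.mul ((Real.continuousOn_log.mono hne).pow j)).mul
        (continuousOn_id.inv₀ hne))]
    congr 1
    refine integral_congr_ae (ae_of_all _ fun t => ?_)
    ring

lemma HasLogPolyApprox.summatory_mul_eval_log_sub_log {c : ℕ → ℝ}
    (hc : HasLogPolyApprox (summatory c)) (Q : Polynomial ℝ) :
    HasLogPolyApprox fun x =>
      summatory (fun n => c n * Q.eval (Real.log x - Real.log n)) (Real.sqrt x) := by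
  induction Q using Polynomial.induction_on' with
  | add p q hp hq =>
    refine (hp.add hq).congr fun x _ => ?_
    simp only [summatory, Polynomial.eval_add, mul_add, Finset.sum_add_distrib]
  | monomial d a =>
    refine (HasLogPolyApprox.sum (Finset.range (d + 1)) fun i _ => ((log_pow i).mul
      (hc.summatory_log_pow_mul (d - i)).comp_sqrt).const_mul
        (a * (-1) ^ (d - i) * d.choose i)).congr fun x _ => ?_
    simp only [summatory, Polynomial.eval_monomial, Finset.mul_sum]
    rw [Finset.sum_comm]
    refine Finset.sum_congr rfl fun n _ => ?_
    rw [sub_eq_add_neg, add_pow, Finset.mul_sum, Finset.mul_sum]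
    refine Finset.sum_congr rfl fun i _ => ?_
    rw [neg_pow (Real.log n)]
    ring

lemma one_le_and_le_sqrt_of_mem_Icc {x : ℝ} {n : ℕ} (hn : n ∈ Finset.Icc 1 ⌊Real.sqrt x⌋₊) :
    (1 : ℝ) ≤ n ∧ (n : ℝ) ≤ Real.sqrt x :=
  ⟨Nat.one_le_cast.2 (Finset.mem_Icc.1 hn).1,
    (Nat.le_floor_iff (Real.sqrt_nonneg x)).1 (Finset.mem_Icc.1 hn).2⟩

lemma rpow_neg_div_le_of_le_sqrt {x y δ : ℝ} (hx : 0 < x) (hy : 0 < y) (hyx : y ≤ Real.sqrt x)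
    (hδ : 0 ≤ δ) : (x / y) ^ (-δ) ≤ x ^ (-(δ / 2)) := by
  have hle : Real.sqrt x ≤ x / y := by
    rw [le_div_iff₀ hy]
    exact (mul_le_mul_of_nonneg_left hyx (Real.sqrt_nonneg x)).trans_eq (Real.mul_self_sqrt hx.le)
  refine (Real.rpow_le_rpow_of_nonpos (Real.sqrt_pos.2 hx) hle (neg_nonpos.2 hδ)).trans_eq ?_
  rw [Real.sqrt_eq_rpow, ← Real.rpow_mul hx.le]
  ring_nf

lemma HasLogPolyApprox.summatory_mul_comp_div_of_isBigO {c : ℕ → ℝ} (hc_nonneg : ∀ n, 0 ≤ c n)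
    (hc : HasLogPolyApprox (summatory c)) {e : ℝ → ℝ} {δ : ℝ} (hδ : 0 < δ)
    (he : e =O[𝓟 (Set.Ici 1)] fun x => x ^ (-δ)) :
    HasLogPolyApprox fun x => summatory (fun n => c n * e (x / n)) (Real.sqrt x) := by
  obtain ⟨C, hC⟩ := isBigO_principal.1 he
  have hbound : ∀ x : ℝ, 1 ≤ x → ‖summatory (fun n => c n * e (x / n)) (Real.sqrt x)‖ ≤
      |C| * ‖x ^ (-(δ / 2)) * summatory c (Real.sqrt x)‖ := fun x hx => by
    have hx0 : 0 < x := by positivity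
    rw [summatory, summatory, norm_mul, Real.norm_of_nonneg (Real.rpow_nonneg hx0.le _),
      Real.norm_of_nonneg (Finset.sum_nonneg fun n _ => hc_nonneg n), Finset.mul_sum,
      Finset.mul_sum]
    refine norm_sum_le_of_le _ fun n hn => ?_
    obtain ⟨hn_one, hn_le⟩ := one_le_and_le_sqrt_of_mem_Icc hn
    have hn_pos : (0 : ℝ) < n := by positivity
    have hxn : 1 ≤ x / n := by
      rw [one_le_div hn_pos]
      exact hn_le.trans (Real.sqrt_le_self_iff.2 (Or.inr hx))
    have hen := hC (x / n) hxn
    rw [Real.norm_of_nonneg (by positivity : 0 ≤ (x / n) ^ (-δ))] at hen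
    rw [norm_mul, Real.norm_of_nonneg (hc_nonneg n)]
    calc c n * ‖e (x / n)‖ ≤ c n * (|C| * x ^ (-(δ / 2))) := by
          gcongr
          · exact hc_nonneg n
          · refine hen.trans ?_
            gcongr
            · exact le_abs_self C
            · exact rpow_neg_div_le_of_le_sqrt hx0 hn_pos hn_le hδ.le
      _ = |C| * (x ^ (-(δ / 2)) * c n) := by ring
  refine of_isBigO (by positivity : 0 < δ / 4) ((isBigO_principal.2 ⟨_, hbound⟩).trans ?_)
  exact isBigO_mul_rpow (isBigO_refl _ _)
    (hc.comp_sqrt.isBigO_rpow (by positivity : 0 < δ / 4)) (by linarith)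

lemma HasLogPolyApprox.summatory_mul_comp_div {c : ℕ → ℝ} (hc_nonneg : ∀ n, 0 ≤ c n)
    (hc : HasLogPolyApprox (summatory c)) {g : ℝ → ℝ} (hg : HasLogPolyApprox g) :
    HasLogPolyApprox fun x => summatory (fun n => c n * g (x / n)) (Real.sqrt x) := by
  obtain ⟨Q, δ, hδ, hQ⟩ := hg
  refine ((hc.summatory_mul_eval_log_sub_log Q).add
    (hc.summatory_mul_comp_div_of_isBigO hc_nonneg hδ hQ)).congr fun x hx => ?_
  rw [summatory, summatory, summatory, ← Finset.sum_add_distrib]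
  refine Finset.sum_congr rfl fun n hn => ?_
  have hn_one := (one_le_and_le_sqrt_of_mem_Icc hn).1
  rw [Real.log_div (by positivity) (by positivity)]
  ring

lemma sum_filter_mul_le_and_le {R : Type*} [AddCommMonoid R] (f : ℕ → ℕ → R) {N r : ℕ}
    (hr : r ≤ N) :
    ∑ p ∈ Finset.Icc 1 N ×ˢ Finset.Icc 1 N with p.1 * p.2 ≤ N ∧ p.1 ≤ r, f p.1 p.2 =
      ∑ n ∈ Finset.Icc 1 r, ∑ m ∈ Finset.Icc 1 (N / n), f n m := by
  refine Finset.sum_finset_product' _ _ _ fun ⟨n, m⟩ => ?_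
  simp only [Finset.mem_filter, Finset.mem_product, Finset.mem_Icc]
  constructor
  · rintro ⟨⟨⟨hn, -⟩, hm, -⟩, hnm, hnr⟩
    exact ⟨⟨hn, hnr⟩, hm, (Nat.le_div_iff_mul_le hn).2 (by rwa [mul_comm])⟩
  · rintro ⟨⟨hn, hnr⟩, hm, hmN⟩
    have hnm : n * m ≤ N := by rw [mul_comm]; exact (Nat.le_div_iff_mul_le hn).1 hmN
    exact ⟨⟨⟨hn, hnr.trans hr⟩, hm, hmN.trans (Nat.div_le_self N n)⟩, hnm, hnr⟩

lemma sum_Icc_mul_eq_hyperbola {R : Type*} [CommRing R] (f g : ArithmeticFunction R) {N r : ℕ}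
    (hrN : r * r ≤ N) (hNr : N < (r + 1) * (r + 1)) :
    ∑ n ∈ Finset.Icc 1 N, (f * g) n =
      ∑ n ∈ Finset.Icc 1 r, f n * ∑ m ∈ Finset.Icc 1 (N / n), g m
        + ∑ m ∈ Finset.Icc 1 r, g m * ∑ n ∈ Finset.Icc 1 (N / m), f n
        - (∑ n ∈ Finset.Icc 1 r, f n) * ∑ m ∈ Finset.Icc 1 r, g m := by
  set box := Finset.Icc 1 N ×ˢ Finset.Icc 1 N
  have hr : r ≤ N := (Nat.le_mul_self r).trans hrN
  have hunion : box.filter (fun p => p.1 * p.2 ≤ N ∧ p.1 ≤ r) ∪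
      box.filter (fun p => p.1 * p.2 ≤ N ∧ p.2 ≤ r) = box.filter (fun p => p.1 * p.2 ≤ N) := by
    rw [← Finset.filter_or]
    refine Finset.filter_congr fun p _ => ⟨fun h => h.elim And.left And.left, fun hp => ?_⟩
    by_contra! h
    exact ((Nat.mul_le_mul (h.1 hp) (h.2 hp)).trans hp).not_gt hNr
  have hinter : box.filter (fun p => p.1 * p.2 ≤ N ∧ p.1 ≤ r) ∩
      box.filter (fun p => p.1 * p.2 ≤ N ∧ p.2 ≤ r) = Finset.Icc 1 r ×ˢ Finset.Icc 1 r := by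
    ext ⟨n, m⟩
    simp only [box, Finset.mem_inter, Finset.mem_filter, Finset.mem_product, Finset.mem_Icc]
    refine ⟨by tauto, fun ⟨⟨hn, hnr⟩, hm, hmr⟩ => ?_⟩
    have hnm : n * m ≤ N := (Nat.mul_le_mul hnr hmr).trans hrN
    exact ⟨⟨⟨⟨hn, hnr.trans hr⟩, hm, hmr.trans hr⟩, hnm, hnr⟩,
      ⟨⟨hn, hnr.trans hr⟩, hm, hmr.trans hr⟩, hnm, hmr⟩
  have hsnd : ∑ p ∈ box with p.1 * p.2 ≤ N ∧ p.2 ≤ r, f p.1 * g p.2 =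
      ∑ m ∈ Finset.Icc 1 r, ∑ n ∈ Finset.Icc 1 (N / m), g m * f n := by
    rw [← sum_filter_mul_le_and_le (fun m n => g m * f n) hr]
    refine Finset.sum_equiv (Equiv.prodComm ℕ ℕ) (fun p => ?_) fun p _ => mul_comm _ _
    simp only [box, Finset.mem_filter, Finset.mem_product, Equiv.prodComm_apply, Prod.fst_swap,
      Prod.snd_swap, mul_comm, and_comm]
  have hsum := Finset.sum_union_inter (s₁ := box.filter fun p => p.1 * p.2 ≤ N ∧ p.1 ≤ r)
    (s₂ := box.filter fun p => p.1 * p.2 ≤ N ∧ p.2 ≤ r) (f := fun p => f p.1 * g p.2)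
  rw [hunion, hinter, sum_filter_mul_le_and_le (fun n m => f n * g m) hr, hsnd] at hsum
  rw [Finset.sum_mul_sum, ← Finset.sum_product']
  simp only [Finset.mul_sum]
  rw [← hsum, add_sub_cancel_right]
  exact ArithmeticFunction.sum_Ioc_mul_eq_sum_prod_filter f g N

lemma summatory_mul_eq_hyperbola (f g : ArithmeticFunction ℝ) {x : ℝ} (hx : 0 ≤ x) :
    summatory (f * g : ArithmeticFunction ℝ) x =
      summatory (fun n => f n * summatory g (x / n)) (Real.sqrt x)
        + summatory (fun n => g n * summatory f (x / n)) (Real.sqrt x)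
        - summatory f (Real.sqrt x) * summatory g (Real.sqrt x) := by
  have hle : ⌊Real.sqrt x⌋₊ * ⌊Real.sqrt x⌋₊ ≤ ⌊x⌋₊ := by
    refine Nat.le_floor ?_
    rw [Nat.cast_mul]
    refine le_of_le_of_eq ?_ (Real.mul_self_sqrt hx)
    gcongr <;> exact Nat.floor_le (Real.sqrt_nonneg x)
  have hlt : ⌊x⌋₊ < (⌊Real.sqrt x⌋₊ + 1) * (⌊Real.sqrt x⌋₊ + 1) := by
    rw [Nat.floor_lt hx]
    push_cast
    refine (Real.mul_self_sqrt hx).symm.trans_lt ?_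
    gcongr <;> exact Nat.lt_floor_add_one _
  simp only [summatory, Nat.floor_div_natCast]
  exact sum_Icc_mul_eq_hyperbola f g hle hlt

lemma HasLogPolyApprox.summatory_mul_summatory_div {c d : ℕ → ℝ} (hc_nonneg : ∀ n, 0 ≤ c n)
    (hc : HasLogPolyApprox fun x => summatory c x / x)
    (hd : HasLogPolyApprox fun x => summatory d x / x) :
    HasLogPolyApprox fun x =>
      summatory (fun n => c n * summatory d (x / n)) (Real.sqrt x) / x := by
  have hc_div_nonneg : ∀ n : ℕ, 0 ≤ c n / n := fun n => div_nonneg (hc_nonneg n) n.cast_nonneg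
  refine (hc.summatory_div.summatory_mul_comp_div hc_div_nonneg hd).congr fun x hx => ?_
  rw [summatory, summatory, Finset.sum_div]
  refine Finset.sum_congr rfl fun n hn => ?_
  have hn_one := (one_le_and_le_sqrt_of_mem_Icc hn).1
  field_simp

lemma HasLogPolyApprox.summatory_mul {f g : ArithmeticFunction ℝ} (hf_nonneg : ∀ n, 0 ≤ f n)
    (hg_nonneg : ∀ n, 0 ≤ g n) (hf : HasLogPolyApprox fun x => summatory f x / x)
    (hg : HasLogPolyApprox fun x => summatory g x / x) :
    HasLogPolyApprox fun x => summatory (f * g : ArithmeticFunction ℝ) x / x := by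
  refine (((hf.summatory_mul_summatory_div hf_nonneg hg).add
    (hg.summatory_mul_summatory_div hg_nonneg hf)).sub (hf.mul hg).comp_sqrt).congr fun x hx => ?_
  have hx0 : 0 ≤ x := by positivity
  rw [summatory_mul_eq_hyperbola f g hx0, sub_div, add_div, div_mul_div_comm,
    Real.mul_self_sqrt hx0]

lemma hasLogPolyApprox_summatory_one :
    HasLogPolyApprox fun x => summatory (1 : ArithmeticFunction ℝ) x / x := by
  have hinv : HasLogPolyApprox fun x : ℝ => x ^ (-1 : ℝ) :=
    HasLogPolyApprox.of_isBigO one_pos (isBigO_refl _ _)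
  refine hinv.congr fun x hx => ?_
  have hsum : summatory (1 : ArithmeticFunction ℝ) x = 1 := by
    simp [summatory, ArithmeticFunction.one_apply, (Nat.one_le_floor_iff x).2 hx]
  rw [hsum, Real.rpow_neg_one, one_div]

lemma hasLogPolyApprox_summatory_zeta :
    HasLogPolyApprox fun x => summatory ((ArithmeticFunction.zeta : ArithmeticFunction ℕ) :
      ArithmeticFunction ℝ) x / x := by
  refine ⟨1, 1, one_pos, isBigO_principal.2 ⟨1, fun x (hx : 1 ≤ x) => ?_⟩⟩
  have hx0 : 0 < x := by positivity
  have hsum : summatory ((ArithmeticFunction.zeta : ArithmeticFunction ℕ) :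
      ArithmeticFunction ℝ) x = ⌊x⌋₊ := by
    rw [summatory, Finset.sum_congr rfl fun n hn => ?_, Finset.sum_const, Nat.card_Icc,
      Nat.add_sub_cancel, nsmul_one]
    rw [ArithmeticFunction.natCoe_apply,
      ArithmeticFunction.zeta_apply_ne (Nat.one_le_iff_ne_zero.1 (Finset.mem_Icc.1 hn).1),
      Nat.cast_one]
  have hfloor : |(⌊x⌋₊ : ℝ) - x| ≤ 1 :=
    abs_le.2 ⟨by linarith [Nat.lt_floor_add_one x], by linarith [Nat.floor_le hx0.le]⟩
  simp only [hsum, Polynomial.eval_one]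
  rw [div_sub_one hx0.ne', Real.rpow_neg_one, norm_div, norm_inv,
    Real.norm_eq_abs, div_eq_mul_inv]
  gcongr

lemma hasLogPolyApprox_summatory_dk (k : ℕ) :
    HasLogPolyApprox fun x => summatory (fun n => (dk k n : ℝ)) x / x := by
  have hpow : HasLogPolyApprox fun x =>
      summatory ((ArithmeticFunction.zeta ^ k : ArithmeticFunction ℕ) :
        ArithmeticFunction ℝ) x / x := by
    induction k with
    | zero => simpa using hasLogPolyApprox_summatory_one
    | succ k ih =>
      rw [pow_succ, ArithmeticFunction.natCoe_mul]
      exact HasLogPolyApprox.summatory_mul (fun n => Nat.cast_nonneg _) (fun n => Nat.cast_nonneg _)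
        ih hasLogPolyApprox_summatory_zeta
  exact hpow

/-! ### Laplace transforms of polynomials -/

/-- The Laplace transform `w ↦ ∫₀^∞ f u e^{-wu} du`; it takes the junk value `0` where the
integrand is not integrable. -/
noncomputable def laplaceTransform (f : ℝ → ℝ) (w : ℝ) : ℝ :=
  ∫ u in Set.Ioi 0, f u * Real.exp (-w * u)

/-- The polynomial obtained from `P` by replacing `X ^ j` with `j! X ^ (j + 1)`: the Laplace
transform of `P` as a polynomial in `w⁻¹`. -/
noncomputable def laplacePolynomial : Polynomial ℝ →ₗ[ℝ] Polynomial ℝ :=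
  Polynomial.lsum fun j => (j.factorial : ℝ) • Polynomial.monomial (j + 1)

lemma laplacePolynomial_monomial (j : ℕ) (a : ℝ) :
    laplacePolynomial (Polynomial.monomial j a) =
      Polynomial.monomial (j + 1) (j.factorial * a) := by
  simp [laplacePolynomial, Polynomial.lsum_apply, Polynomial.sum_monomial_index,
    Polynomial.smul_monomial]

lemma coeff_zero_laplacePolynomial (P : Polynomial ℝ) : (laplacePolynomial P).coeff 0 = 0 := by
  induction P using Polynomial.induction_on' with
  | add p q hp hq => rw [map_add, Polynomial.coeff_add, hp, hq, add_zero]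
  | monomial n a =>
    rw [laplacePolynomial_monomial, Polynomial.coeff_monomial_of_ne _ n.succ_ne_zero.symm]

lemma coeff_succ_laplacePolynomial (P : Polynomial ℝ) (j : ℕ) :
    (laplacePolynomial P).coeff (j + 1) = j.factorial * P.coeff j := by
  induction P using Polynomial.induction_on' with
  | add p q hp hq => rw [map_add, Polynomial.coeff_add, hp, hq, Polynomial.coeff_add, mul_add]
  | monomial n a =>
    rw [laplacePolynomial_monomial, Polynomial.coeff_monomial, Polynomial.coeff_monomial]
    by_cases hnj : n = j <;> simp [hnj]

lemma laplacePolynomial_injective : Function.Injective laplacePolynomial := by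
  refine (injective_iff_map_eq_zero laplacePolynomial).2 fun P hP => ?_
  ext j
  have hj := coeff_succ_laplacePolynomial P j
  rw [hP, Polynomial.coeff_zero, zero_eq_mul] at hj
  exact hj.resolve_left (Nat.cast_ne_zero.2 j.factorial_ne_zero)

lemma integrableOn_eval_mul_exp (P : Polynomial ℝ) {w : ℝ} (hw : 0 < w) :
    IntegrableOn (fun u => P.eval u * Real.exp (-w * u)) (Set.Ioi 0) := by
  induction P using Polynomial.induction_on' with
  | add p q hp hq =>
    simp only [Polynomial.eval_add, add_mul]
    exact hp.add hq
  | monomial n a =>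
    simp only [Polynomial.eval_monomial, mul_assoc]
    exact (integrableOn_pow_mul_exp_neg_mul hw n).const_mul a

lemma laplaceTransform_eval (P : Polynomial ℝ) {w : ℝ} (hw : 0 < w) :
    laplaceTransform (fun u => P.eval u) w = (laplacePolynomial P).eval w⁻¹ := by
  induction P using Polynomial.induction_on' with
  | add p q hp hq =>
    rw [map_add, Polynomial.eval_add, ← hp, ← hq, laplaceTransform]
    simp only [Polynomial.eval_add, add_mul]
    exact integral_add (integrableOn_eval_mul_exp p hw) (integrableOn_eval_mul_exp q hw)
  | monomial n a =>
    rw [laplacePolynomial_monomial, Polynomial.eval_monomial, laplaceTransform]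
    simp only [Polynomial.eval_monomial, mul_assoc]
    rw [integral_const_mul, integral_pow_mul_exp_neg_mul hw n, inv_pow]
    ring

lemma eq_zero_of_abs_eval_laplacePolynomial_inv_le {P : Polynomial ℝ} {B : ℝ}
    (hP : ∀ᶠ w in 𝓝[>] 0, |(laplacePolynomial P).eval w⁻¹| ≤ B) : P = 0 := by
  have hdegree : (laplacePolynomial P).degree ≤ 0 := by
    rw [← Polynomial.isBoundedUnder_abs_atTop_iff]
    refine ⟨B, eventually_map.2 ?_⟩
    filter_upwards [tendsto_inv_atTop_nhdsGT_zero.eventually hP] with x hx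
    rwa [inv_inv] at hx
  refine laplacePolynomial_injective ?_
  rw [map_zero, Polynomial.eq_C_of_degree_le_zero hdegree, coeff_zero_laplacePolynomial,
    Polynomial.C_0]

namespace IsLogPolyApprox

variable {Q : Polynomial ℝ} {g : ℝ → ℝ}

lemma exists_norm_comp_exp_sub_le (hg : IsLogPolyApprox Q g) :
    ∃ C δ : ℝ, 0 < δ ∧ ∀ u ∈ Set.Ioi (0 : ℝ),
      ‖g (Real.exp u) - Q.eval u‖ ≤ C * Real.exp (-δ * u) := by
  obtain ⟨δ, hδ, hQ⟩ := hg
  obtain ⟨C, hC⟩ := isBigO_principal.1 hQ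
  refine ⟨C, δ, hδ, fun u (hu : 0 < u) => ?_⟩
  have hu_exp := hC (Real.exp u) (Real.one_le_exp hu.le)
  rwa [Real.log_exp, ← Real.exp_mul, mul_comm u, Real.norm_of_nonneg (Real.exp_pos _).le] at hu_exp

lemma integrableOn_comp_exp_sub (hg : IsLogPolyApprox Q g) (hg_meas : Measurable g) :
    IntegrableOn (fun u => g (Real.exp u) - Q.eval u) (Set.Ioi 0) := by
  obtain ⟨C, δ, hδ, hbound⟩ := hg.exists_norm_comp_exp_sub_le
  exact ((integrableOn_exp_neg_mul hδ).const_mul C).mono'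
    ((hg_meas.comp Real.measurable_exp).sub Q.continuous.measurable).aestronglyMeasurable
    ((ae_restrict_iff' measurableSet_Ioi).2 (ae_of_all _ hbound))

lemma memLp_two_comp_exp_sub (hg : IsLogPolyApprox Q g) (hg_meas : Measurable g) :
    MemLp (fun u => g (Real.exp u) - Q.eval u) 2 (volume.restrict (Set.Ioi 0)) := by
  obtain ⟨C, δ, hδ, hbound⟩ := hg.exists_norm_comp_exp_sub_le
  refine ((memLp_exp_neg_mul hδ).const_mul C).mono'
    ((hg_meas.comp Real.measurable_exp).sub Q.continuous.measurable).aestronglyMeasurable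
    ((ae_restrict_iff' measurableSet_Ioi).2 (ae_of_all _ hbound))

lemma exists_abs_laplaceTransform_sub_le (hg : IsLogPolyApprox Q g) (hg_meas : Measurable g) :
    ∃ B : ℝ, ∀ w, 0 < w →
      |laplaceTransform (fun u => g (Real.exp u)) w - (laplacePolynomial Q).eval w⁻¹| ≤ B := by
  have herr := (hg.integrableOn_comp_exp_sub hg_meas).norm
  refine ⟨∫ u in Set.Ioi 0, ‖g (Real.exp u) - Q.eval u‖, fun w hw => ?_⟩
  have hbound : ∀ᵐ u ∂volume.restrict (Set.Ioi 0),
      ‖(g (Real.exp u) - Q.eval u) * Real.exp (-w * u)‖ ≤ ‖g (Real.exp u) - Q.eval u‖ := by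
    refine (ae_restrict_iff' measurableSet_Ioi).2 (ae_of_all _ fun u (hu : 0 < u) => ?_)
    rw [norm_mul, Real.norm_of_nonneg (Real.exp_pos _).le]
    refine mul_le_of_le_one_right (norm_nonneg _) (Real.exp_le_one_iff.2 ?_)
    rw [neg_mul]
    exact neg_nonpos.2 (by positivity)
  have herr_exp : IntegrableOn (fun u => (g (Real.exp u) - Q.eval u) * Real.exp (-w * u))
      (Set.Ioi 0) :=
    herr.mono' (((hg_meas.comp Real.measurable_exp).sub Q.continuous.measurable).mul
      (by fun_prop)).aestronglyMeasurable hbound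
  have hsplit : laplaceTransform (fun u => g (Real.exp u)) w = (laplacePolynomial Q).eval w⁻¹ +
      ∫ u in Set.Ioi 0, (g (Real.exp u) - Q.eval u) * Real.exp (-w * u) := by
    rw [← laplaceTransform_eval Q hw, laplaceTransform, laplaceTransform,
      ← integral_add (integrableOn_eval_mul_exp Q hw) herr_exp]
    refine integral_congr_ae (ae_of_all _ fun u => ?_)
    ring
  rw [hsplit, add_sub_cancel_left]
  exact norm_integral_le_of_norm_le herr hbound

lemma eq_of_abs_laplaceTransform_sub_le (hg : IsLogPolyApprox Q g) (hg_meas : Measurable g)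
    {P : Polynomial ℝ} {B : ℝ} (hP : ∀ᶠ w in 𝓝[>] 0,
      |laplaceTransform (fun u => g (Real.exp u)) w - (laplacePolynomial P).eval w⁻¹| ≤ B) :
    Q = P := by
  obtain ⟨B', hQ⟩ := hg.exists_abs_laplaceTransform_sub_le hg_meas
  refine sub_eq_zero.1 (eq_zero_of_abs_eval_laplacePolynomial_inv_le (B := B + B') ?_)
  filter_upwards [hP, self_mem_nhdsWithin] with w hPw hw
  rw [map_sub, Polynomial.eval_sub]
  exact (abs_sub_le _ (laplaceTransform (fun u => g (Real.exp u)) w) _).trans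
    ((add_le_add ((abs_sub_comm _ _).trans_le (hQ w hw)) hPw).trans_eq (add_comm _ _))

end IsLogPolyApprox

/-! ### The main term of the Piltz divisor problem -/

lemma LSeriesHasSum_natCoe_zeta_pow (k : ℕ) {s : ℂ} (hs : 1 < s.re) :
    LSeriesHasSum (fun n => (((ArithmeticFunction.zeta ^ k : ArithmeticFunction ℕ) :
      ArithmeticFunction ℂ) n)) s (riemannZeta s ^ k) := by
  induction k with
  | zero =>
    rw [pow_zero, pow_zero, ArithmeticFunction.natCoe_one, ArithmeticFunction.one_eq_delta,
      LSeriesHasSum, funext (LSeries.term_delta s)]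
    exact hasSum_ite_eq 1 (1 : ℂ)
  | succ k ih =>
    rw [pow_succ, pow_succ, ArithmeticFunction.natCoe_mul]
    exact ArithmeticFunction.LSeriesHasSum_mul ih
      (by simpa using ArithmeticFunction.LSeriesHasSum_zeta hs)

lemma HasLogPolyApprox.isBigO_sum_Icc {c : ℕ → ℝ}
    (hc : HasLogPolyApprox fun x => summatory c x / x) {η : ℝ} (hη : 0 < η) :
    (fun N : ℕ => ∑ n ∈ Finset.Icc 1 N, c n) =O[atTop] fun N : ℕ => (N : ℝ) ^ (1 + η) := by
  have hcast : Tendsto (Nat.cast : ℕ → ℝ) atTop (𝓟 (Set.Ici 1)) :=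
    tendsto_principal.2 <| by
      filter_upwards [eventually_ge_atTop 1] with N hN using Set.mem_Ici.2 (Nat.one_le_cast.2 hN)
  have hid : (fun x : ℝ => x) =O[𝓟 (Set.Ici 1)] fun x => x ^ (1 : ℝ) := by
    simpa only [Real.rpow_one] using isBigO_refl (fun x : ℝ => x) _
  refine ((isBigO_mul_rpow hid (hc.isBigO_rpow hη) le_rfl).comp_tendsto hcast).congr' ?_
    EventuallyEq.rfl
  filter_upwards [eventually_ne_atTop 0] with N hN
  simp only [Function.comp_apply, summatory, Nat.floor_natCast]
  exact mul_div_cancel₀ _ (Nat.cast_ne_zero.2 hN)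

lemma LSeries_one_add_eq_laplaceTransform {c : ℕ → ℝ} (hc_nonneg : ∀ n, 0 ≤ c n)
    (hc : HasLogPolyApprox fun x => summatory c x / x) {w : ℝ} (hw : 0 < w) :
    LSeries (fun n => (c n : ℂ)) (1 + w) =
      (((1 + w) * laplaceTransform (fun u => summatory c (Real.exp u) / Real.exp u) w : ℝ) :
        ℂ) := by
  have hmellin := LSeries_eq_mul_integral_of_nonneg c (by positivity : 0 ≤ 1 + w / 2)
    (s := 1 + w) (by simpa using hw) (hc.isBigO_sum_Icc (half_pos hw)) hc_nonneg
  have hreal : ∫ t in Set.Ioi (1 : ℝ), (∑ n ∈ Finset.Icc 1 ⌊t⌋₊, (c n : ℂ)) *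
      (t : ℂ) ^ (-(1 + w + 1) : ℂ) =
      ((∫ t in Set.Ioi (1 : ℝ), summatory c t * t ^ (-(1 + w + 1)) : ℝ) : ℂ) := by
    rw [← integral_complex_ofReal]
    refine setIntegral_congr_fun measurableSet_Ioi fun t (ht : 1 < t) => ?_
    simp only [summatory]
    push_cast [Complex.ofReal_cpow (one_pos.trans ht).le]
    rfl
  have hexp : ∫ t in Set.Ioi (1 : ℝ), summatory c t * t ^ (-(1 + w + 1)) =
      laplaceTransform (fun u => summatory c (Real.exp u) / Real.exp u) w := by
    have hsubst := integral_comp_exp_Ioi (fun t => summatory c t * t ^ (-(1 + w + 1))) 0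
    rw [Real.exp_zero] at hsubst
    rw [← hsubst, laplaceTransform]
    refine integral_congr_ae (ae_of_all _ fun u => ?_)
    have hrpow : Real.exp u ^ (-(1 + w + 1)) =
        Real.exp (-w * u) / (Real.exp u * Real.exp u) := by
      rw [← Real.exp_mul, ← Real.exp_add, ← Real.exp_sub]
      ring_nf
    simp only [hrpow, smul_eq_mul]
    field_simp
  rw [hmellin, hreal, hexp]
  push_cast
  rfl

lemma riemannZeta_pow_eq_laplaceTransform (k : ℕ) {w : ℝ} (hw : 0 < w) :
    riemannZeta (1 + w) ^ k = (((1 + w) * laplaceTransform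
      (fun u => summatory (fun n => (dk k n : ℝ)) (Real.exp u) / Real.exp u) w : ℝ) : ℂ) := by
  rw [← LSeries_one_add_eq_laplaceTransform (fun n => Nat.cast_nonneg _)
    (hasLogPolyApprox_summatory_dk k) hw]
  exact (LSeriesHasSum_natCoe_zeta_pow k (by simpa using hw)).LSeries_eq.symm

lemma analyticAt_zetaPowAux (k : ℕ) : AnalyticAt ℂ (zetaPowAux k) 1 := by
  refine Complex.analyticAt_of_differentiable_on_punctured_nhds_of_continuousAt ?_ ?_
  · filter_upwards [self_mem_nhdsWithin] with z (hz : z ≠ 1)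
    have hdiff : DifferentiableAt ℂ (fun s : ℂ => ((s - 1) * riemannZeta s) ^ k) z :=
      ((differentiableAt_id.sub_const 1).mul (differentiableAt_riemannZeta hz)).pow k
    refine hdiff.congr_of_eventuallyEq ?_
    filter_upwards [isOpen_ne.mem_nhds hz] with s hs
    exact Function.update_of_ne hs _ _
  · rw [zetaPowAux, continuousAt_update_same]
    simpa using riemannZeta_residue_one.pow k

lemma exists_abs_re_zetaPowAux_sub_le (k : ℕ) : ∃ C : ℝ, ∀ᶠ w : ℝ in 𝓝[>] 0,
    |(zetaPowAux k (1 + w)).re - ∑ i ∈ Finset.range k, lam k i / i.factorial * w ^ i|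
      ≤ C * w ^ k := by
  have htendsto : Tendsto (fun w : ℝ => (w : ℂ)) (𝓝[>] 0) (𝓝 0) :=
    (Complex.continuous_ofReal.tendsto' 0 0 Complex.ofReal_zero).mono_left nhdsWithin_le_nhds
  obtain ⟨C, hC⟩ := (((analyticAt_zetaPowAux k).hasFPowerSeriesAt.isBigO_sub_partialSum_pow
    k).comp_tendsto htendsto).bound
  refine ⟨C, ?_⟩
  filter_upwards [hC, self_mem_nhdsWithin] with w hw (hw0 : 0 < w)
  have hre : (zetaPowAux k (1 + w)).re - ∑ i ∈ Finset.range k, lam k i / i.factorial * w ^ i =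
      (zetaPowAux k (1 + w) - (FormalMultilinearSeries.ofScalars ℂ fun n =>
        iteratedDeriv n (zetaPowAux k) 1 / (n.factorial : ℂ)).partialSum k w).re := by
    rw [Complex.sub_re, FormalMultilinearSeries.partialSum, Complex.re_sum]
    congr 1
    refine Finset.sum_congr rfl fun i _ => ?_
    rw [FormalMultilinearSeries.ofScalars_apply_eq, smul_eq_mul, ← Complex.ofReal_pow,
      Complex.re_mul_ofReal, Complex.div_natCast_re, lam]
  rw [hre]
  refine (Complex.abs_re_le_norm _).trans (hw.trans_eq ?_)
  simp [abs_of_pos hw0]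

lemma one_add_mul_sum_alternating {R : Type*} [CommRing R] (l : ℕ → R) (w : R) (K : ℕ) :
    (1 + w) * ∑ n ∈ Finset.range (K + 1),
        ((-1) ^ n * ∑ i ∈ Finset.range (n + 1), (-1) ^ i * l i) * w ^ n =
      ∑ i ∈ Finset.range (K + 1), l i * w ^ i
        + ((-1) ^ K * ∑ i ∈ Finset.range (K + 1), (-1) ^ i * l i) * w ^ (K + 1) := by
  induction K with
  | zero =>
    simp only [zero_add, Finset.sum_range_one, pow_zero, pow_one]
    ring
  | succ K ih =>
    rw [Finset.sum_range_succ, mul_add, ih, Finset.sum_range_succ _ (K + 1),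
      Finset.sum_range_succ _ (K + 1)]
    have hsign : (-1 : R) ^ (K + 1) * (-1) ^ (K + 1) = 1 := by
      rw [← mul_pow, neg_one_mul, neg_neg, one_pow]
    linear_combination (l (K + 1) * w ^ (K + 1)) * hsign

/-- The polynomial `P_k` of the main term `x P_k(log x)` in the Piltz divisor problem. -/
noncomputable def piltzPolynomial (k : ℕ) : Polynomial ℝ :=
  ∑ j ∈ Finset.range k, Polynomial.monomial j (aCoef k j / j.factorial)

lemma eval_laplacePolynomial_piltzPolynomial (k : ℕ) (x : ℝ) :
    (laplacePolynomial (piltzPolynomial k)).eval x =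
      ∑ j ∈ Finset.range k, aCoef k j * x ^ (j + 1) := by
  rw [piltzPolynomial, map_sum, Polynomial.eval_finsetSum]
  refine Finset.sum_congr rfl fun j _ => ?_
  rw [laplacePolynomial_monomial, Polynomial.eval_monomial,
    mul_div_cancel₀ _ (Nat.cast_ne_zero.2 j.factorial_ne_zero)]

-- The Laplace transform of `P_k` is the polar part of `ζ(1 + w)^k / (1 + w)` at `w = 0`; the factor
-- `(1 + w)⁻¹ = ∑ (-w)^n` is where the alternating sums in `aCoef` come from.
lemma one_add_mul_pow_mul_eval_laplacePolynomial_piltzPolynomial {k : ℕ} (hk : 0 < k) {w : ℝ}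
    (hw : w ≠ 0) :
    (1 + w) * (w ^ k * (laplacePolynomial (piltzPolynomial k)).eval w⁻¹) =
      ∑ i ∈ Finset.range k, lam k i / i.factorial * w ^ i + aCoef k 0 * w ^ k := by
  obtain ⟨K, rfl⟩ := Nat.exists_eq_add_one.2 hk
  have haCoef : ∀ n ≤ K, aCoef (K + 1) (K - n) = (-1) ^ n *
      ∑ i ∈ Finset.range (n + 1), (-1) ^ i * (lam (K + 1) i / i.factorial) := fun n hn => by
    rw [aCoef, Nat.add_sub_cancel, Nat.sub_sub_self hn]
    simp only [mul_div_assoc]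
  have hreflect : w ^ (K + 1) * (laplacePolynomial (piltzPolynomial (K + 1))).eval w⁻¹ =
      ∑ n ∈ Finset.range (K + 1), ((-1) ^ n * ∑ i ∈ Finset.range (n + 1),
        (-1) ^ i * (lam (K + 1) i / i.factorial)) * w ^ n := by
    rw [eval_laplacePolynomial_piltzPolynomial, ← Finset.sum_range_reflect, Finset.mul_sum]
    refine Finset.sum_congr rfl fun n hn => ?_
    have hn_le : n ≤ K := Nat.lt_succ_iff.1 (Finset.mem_range.1 hn)
    have hpow : w ^ (K + 1) = w ^ n * w ^ (K - n + 1) := by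
      rw [← pow_add]
      congr 1
      omega
    rw [← haCoef n hn_le, Nat.add_sub_cancel, hpow, inv_pow]
    field_simp
  rw [hreflect, one_add_mul_sum_alternating, ← haCoef K le_rfl, Nat.sub_self]

lemma exists_abs_laplaceTransform_summatory_dk_sub_le {k : ℕ} (hk : 0 < k) :
    ∃ B : ℝ, ∀ᶠ w : ℝ in 𝓝[>] 0,
      |laplaceTransform
          (fun u => summatory (fun n => (dk k n : ℝ)) (Real.exp u) / Real.exp u) w -
        (laplacePolynomial (piltzPolynomial k)).eval w⁻¹| ≤ B := by
  obtain ⟨C, hC⟩ := exists_abs_re_zetaPowAux_sub_le k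
  refine ⟨C + |aCoef k 0|, ?_⟩
  filter_upwards [hC, self_mem_nhdsWithin] with w hw (hw0 : 0 < w)
  set F := laplaceTransform
    (fun u => summatory (fun n => (dk k n : ℝ)) (Real.exp u) / Real.exp u) w
  set I := (laplacePolynomial (piltzPolynomial k)).eval w⁻¹
  have hzeta : (zetaPowAux k (1 + w)).re = w ^ k * ((1 + w) * F) := by
    have hne : (1 + w : ℂ) ≠ 1 := by simpa using hw0.ne'
    rw [zetaPowAux, Function.update_of_ne hne, add_sub_cancel_left, mul_pow,
      riemannZeta_pow_eq_laplaceTransform k hw0, ← Complex.ofReal_pow, ← Complex.ofReal_mul,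
      Complex.ofReal_re]
  have hpiltz := one_add_mul_pow_mul_eval_laplacePolynomial_piltzPolynomial hk hw0.ne'
  have hdiff : w ^ k * ((1 + w) * (F - I)) = ((zetaPowAux k (1 + w)).re -
      ∑ i ∈ Finset.range k, lam k i / i.factorial * w ^ i) - aCoef k 0 * w ^ k := by
    rw [hzeta]
    linear_combination -hpiltz
  have hwk : 0 < w ^ k := by positivity
  refine le_of_mul_le_mul_left (a := w ^ k) ?_ hwk
  calc w ^ k * |F - I| ≤ w ^ k * ((1 + w) * |F - I|) := by
        gcongr
        exact le_mul_of_one_le_left (abs_nonneg _) (by linarith)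
    _ = |w ^ k * ((1 + w) * (F - I))| := by
        rw [abs_mul, abs_mul, abs_of_pos hwk, abs_of_pos (by linarith : 0 < 1 + w)]
    _ ≤ C * w ^ k + |aCoef k 0 * w ^ k| := by
        rw [hdiff]
        exact (abs_sub _ _).trans (by gcongr)
    _ = w ^ k * (C + |aCoef k 0|) := by
        rw [abs_mul, abs_of_pos hwk]
        ring

theorem isLogPolyApprox_summatory_dk {k : ℕ} (hk : 0 < k) :
    IsLogPolyApprox (piltzPolynomial k) fun x => summatory (fun n => (dk k n : ℝ)) x / x := by
  obtain ⟨Q, hQ⟩ := hasLogPolyApprox_summatory_dk k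
  obtain ⟨B, hB⟩ := exists_abs_laplaceTransform_summatory_dk_sub_le hk
  rwa [← hQ.eq_of_abs_laplaceTransform_sub_le (measurable_summatory_div _) hB]

/-! ### The error term and its transform -/

/-- The error term `Δ_k(e^u) e^{-u}` in logarithmic scale. -/
noncomputable def logDelta (k : ℕ) (u : ℝ) : ℝ :=
  summatory (fun n => (dk k n : ℝ)) (Real.exp u) / Real.exp u - (piltzPolynomial k).eval u

lemma Deltak_exp (k : ℕ) (u : ℝ) : Deltak k (Real.exp u) = Real.exp u * logDelta k u := by
  rw [logDelta, mul_sub, mul_div_cancel₀ _ (Real.exp_ne_zero u), piltzPolynomial,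
    Polynomial.eval_finsetSum, Deltak, summatory, Real.log_exp]
  simp only [Polynomial.eval_monomial]

lemma phik_eq_hankelTransform (k : ℕ) : phik k = hankelTransform (logDelta k) := by
  ext x
  rw [phik, ← Real.exp_zero, ← integral_comp_exp_Ioi, hankelTransform]
  refine integral_congr_ae (ae_of_all _ fun u => ?_)
  simp only [Deltak_exp, Real.log_exp, smul_eq_mul]
  field_simp

lemma exp_smul_Deltak_exp_sq_div (k : ℕ) (u : ℝ) :
    Real.exp u • (Deltak k (Real.exp u) ^ 2 / Real.exp u ^ 3) = logDelta k u ^ 2 := by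
  rw [Deltak_exp, smul_eq_mul]
  field_simp

theorem stmt16 (k : ℕ) (hk : 0 < k) :
    IntegrableOn (fun x : ℝ => (phik k x) ^ 2) (Set.Ioi 0) ∧
    IntegrableOn (fun r : ℝ => (Deltak k r) ^ 2 / r ^ 3) (Set.Ioi 1) ∧
    ∫ x in Set.Ioi (0 : ℝ), (phik k x) ^ 2 = ∫ r in Set.Ioi (1 : ℝ), (Deltak k r) ^ 2 / r ^ 3 := by
  have happrox := isLogPolyApprox_summatory_dk hk
  have hmeas := measurable_summatory_div fun n => (dk k n : ℝ)
  have hint : IntegrableOn (logDelta k) (Set.Ioi 0) := happrox.integrableOn_comp_exp_sub hmeas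
  have hsq : MemLp (logDelta k) 2 (volume.restrict (Set.Ioi 0)) :=
    happrox.memLp_two_comp_exp_sub hmeas
  obtain ⟨hphi_sq, hplancherel⟩ := hankel_plancherel hint hsq
  rw [phik_eq_hankelTransform, ← Real.exp_zero, ← integrableOn_comp_exp_Ioi,
    ← integral_comp_exp_Ioi]
  simp only [exp_smul_Deltak_exp_sq_div]
  exact ⟨hphi_sq.integrable_sq, hsq.integrable_sq, hplancherel⟩
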